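/- Let d ≥ 2, let 0 < ε < 1/(64·d⁴), and let X ⊂ S^{d−1} be a finite set with |X| ≥ 2d such that the spherical distance δ(x,y) ≥ π/2 − 2ε for all distinct x, y ∈ X. Then |X| = 2d, and there exist an orthonormal basis w_1, …, w_d of ℝ^d and an enumeration u_1, …, u_{2d} of X such that δ(u_i, w_i) ≤ 96·d³·ε and δ(u_{i+d}, −w_i) ≤ 96·d³·ε for i = 1, …, d. -/

import Mathlib

open scoped RealInnerProductSpace

/-!
Since `0 ≤ ‖∑ i, v i‖ ^ 2`, the Welch bound shows that `N` unit vectors in dimension `n` satisfy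
`N ^ 2 ≤ n * ∑ i, ∑ j, (⟪v i, v j⟫ ^ 2 + ⟪v i, v j⟫)`. The polynomial `t ^ 2 + t` is nonpositive on
`[-1, 0]`, so if all mutual inner products are at most a small `σ`, this forces `N ≤ 2 * n`. For
`N = 2 * n` the inequality is almost an equality, so every inner product is close to a root of
`t ^ 2 + t`, that is, to `0` or `-1`.

Two vectors that are almost antipodal to the same vector are close to each other, hence equal, and
the Welch bound now shows that each vector does have an almost antipodal partner. One vector from
each pair gives `n` almost orthonormal vectors `x k`, which the Gram–Schmidt process hardly moves.
The partner `y k` of `x k` is close to `-x k` because `x k + y k` is almost orthogonal to all of the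
`x j`.
-/

open Module (finrank)

variable {ι κ E : Type*} [NormedAddCommGroup E] [InnerProductSpace ℝ E]

section Welch

variable [Fintype ι]

theorem sq_norm_sum_smul (c : ι → ℝ) (v : ι → E) :
    ‖∑ i, c i • v i‖ ^ 2 = ∑ i, ∑ j, c i * c j * ⟪v i, v j⟫ := by
  simp only [← real_inner_self_eq_norm_sq, sum_inner, inner_sum, real_inner_smul_right, mul_assoc,
    real_inner_comm, mul_left_comm]

/-- The **Welch bound**: the left side is the squared trace of the frame operator
`x ↦ ∑ i, ⟪v i, x⟫ • v i`, and Cauchy–Schwarz on its diagonal entries compares it with the squared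
Hilbert–Schmidt norm. -/
theorem sq_sum_sq_norm_le_finrank_mul_sum_sq_inner [FiniteDimensional ℝ E] (v : ι → E) :
    (∑ i, ‖v i‖ ^ 2) ^ 2 ≤ finrank ℝ E * ∑ i, ∑ j, ⟪v i, v j⟫ ^ 2 := by
  let b := stdOrthonormalBasis ℝ E
  have sq_le (k) : (∑ i, ⟪v i, b k⟫ ^ 2) ^ 2 ≤ ‖∑ i, ⟪v i, b k⟫ • v i‖ ^ 2 := by
    have h : ∑ i, ⟪v i, b k⟫ ^ 2 = ⟪∑ i, ⟪v i, b k⟫ • v i, b k⟫ := by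
      simp only [sum_inner, real_inner_smul_left, sq]
    rw [h, sq_le_sq, abs_norm]
    simpa using abs_real_inner_le_norm (∑ i, ⟪v i, b k⟫ • v i) (b k)
  have sum_eq : ∑ k, ‖∑ i, ⟪v i, b k⟫ • v i‖ ^ 2 = ∑ i, ∑ j, ⟪v i, v j⟫ ^ 2 := by
    simp only [sq_norm_sum_smul]
    rw [Finset.sum_comm]
    refine Finset.sum_congr rfl fun i _ ↦ ?_
    rw [Finset.sum_comm]
    refine Finset.sum_congr rfl fun j _ ↦ ?_
    rw [← Finset.sum_mul, sq, ← b.sum_inner_mul_inner (v i) (v j)]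
    simp only [real_inner_comm]
  calc (∑ i, ‖v i‖ ^ 2) ^ 2 = (∑ k, ∑ i, ⟪v i, b k⟫ ^ 2) ^ 2 := by
        rw [Finset.sum_comm]
        simp only [b.sum_sq_inner_left]
    _ ≤ finrank ℝ E * ∑ k, (∑ i, ⟪v i, b k⟫ ^ 2) ^ 2 := by
        simpa using sq_sum_le_card_mul_sum_sq (s := Finset.univ) (f := fun k ↦ ∑ i, ⟪v i, b k⟫ ^ 2)
    _ ≤ finrank ℝ E * ∑ i, ∑ j, ⟪v i, v j⟫ ^ 2 := by
        rw [← sum_eq]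
        exact mul_le_mul_of_nonneg_left (Finset.sum_le_sum fun k _ ↦ sq_le k) (Nat.cast_nonneg _)

end Welch

variable {v : ι → E} {σ τ : ℝ}

theorem sq_inner_add_inner_le {x y : E} (hx : ‖x‖ = 1) (hy : ‖y‖ = 1) (hσ : 0 ≤ σ)
    (h : ⟪x, y⟫ ≤ σ) : ⟪x, y⟫ ^ 2 + ⟪x, y⟫ ≤ σ ^ 2 + σ := by
  have := neg_one_le_real_inner_of_norm_eq_one hx hy
  nlinarith

section Delsarte

variable [Fintype ι]

theorem cast_card_offDiag_univ :
    ((Finset.univ : Finset ι).offDiag.card : ℝ) = Fintype.card ι * (Fintype.card ι - 1) := by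
  rw [Finset.offDiag_card, Finset.card_univ, Nat.cast_sub (Nat.le_mul_self _)]
  push_cast
  ring

variable [FiniteDimensional ℝ E]

theorem sq_card_le_finrank_mul_sum_offDiag (hv : ∀ i, ‖v i‖ = 1) :
    (Fintype.card ι : ℝ) ^ 2 ≤ finrank ℝ E * (2 * Fintype.card ι +
      ∑ p ∈ Finset.univ.offDiag, (⟪v p.1, v p.2⟫ ^ 2 + ⟪v p.1, v p.2⟫)) := by
  classical
  have welch : (Fintype.card ι : ℝ) ^ 2 ≤ finrank ℝ E * ∑ i, ∑ j, ⟪v i, v j⟫ ^ 2 := by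
    simpa [hv] using sq_sum_sq_norm_le_finrank_mul_sum_sq_inner v
  have nonneg : 0 ≤ ∑ i, ∑ j, ⟪v i, v j⟫ := by
    have h := sq_norm_sum_smul (fun _ ↦ 1) v
    simp only [mul_one, one_mul] at h
    exact h ▸ sq_nonneg _
  have split : ∑ i, ∑ j, (⟪v i, v j⟫ ^ 2 + ⟪v i, v j⟫) = 2 * Fintype.card ι +
      ∑ p ∈ Finset.univ.offDiag, (⟪v p.1, v p.2⟫ ^ 2 + ⟪v p.1, v p.2⟫) := by
    rw [← Finset.sum_product', ← Finset.diag_union_offDiag,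
      Finset.sum_union (Finset.disjoint_diag_offDiag _)]
    simp [hv, mul_comm, one_add_one_eq_two]
  refine welch.trans ?_
  rw [← split]
  simp only [Finset.sum_add_distrib]
  gcongr
  exact le_add_of_nonneg_right nonneg

theorem card_le_two_mul_finrank (hv : ∀ i, ‖v i‖ = 1) (hσ : 0 ≤ σ)
    (hinner : Pairwise fun i j ↦ ⟪v i, v j⟫ ≤ σ)
    (hσn : 2 * (finrank ℝ E : ℝ) ^ 2 * (σ ^ 2 + σ) < 1) :
    Fintype.card ι ≤ 2 * finrank ℝ E := by
  set n := finrank ℝ E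
  set N := Fintype.card ι
  set s := σ ^ 2 + σ
  have sum_le : ∑ p ∈ (Finset.univ : Finset ι).offDiag, (⟪v p.1, v p.2⟫ ^ 2 + ⟪v p.1, v p.2⟫)
      ≤ N * (N - 1) * s := by
    refine (Finset.sum_le_card_nsmul _ _ s fun p hp ↦ sq_inner_add_inner_le (hv _) (hv _) hσ
      (hinner (Finset.mem_offDiag.mp hp).2.2)).trans_eq ?_
    rw [nsmul_eq_mul, cast_card_offDiag_univ]
  have hN : (N : ℝ) ^ 2 ≤ n * (2 * N + N * (N - 1) * s) :=
    (sq_card_le_finrank_mul_sum_offDiag hv).trans (by gcongr)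
  by_contra! hlt
  have hlt' : 2 * (n : ℝ) ≤ N - 1 := by
    rw [le_sub_iff_add_le]
    exact_mod_cast hlt
  have hN_pos : (0 : ℝ) < N := by exact_mod_cast (Nat.zero_le _).trans_lt hlt
  have hN' : (N : ℝ) ≤ n * (2 + (N - 1) * s) :=
    le_of_mul_le_mul_left (by linarith) hN_pos
  have hns : n * s ≤ 1 := by
    have hs : 0 ≤ s := by positivity
    have hn : (n : ℝ) ≤ n ^ 2 := by exact_mod_cast Nat.le_self_pow two_ne_zero n
    nlinarith
  have := mul_le_mul_of_nonneg_left hlt' (sub_nonneg.mpr hns)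
  linarith

theorem neg_le_sq_inner_add_inner (hv : ∀ i, ‖v i‖ = 1) (hσ : 0 ≤ σ)
    (hinner : Pairwise fun i j ↦ ⟪v i, v j⟫ ≤ σ) (hcard : Fintype.card ι = 2 * finrank ℝ E)
    {i j : ι} (hij : i ≠ j) :
    -(2 * (finrank ℝ E : ℝ) ^ 2 * (σ ^ 2 + σ)) ≤ ⟪v i, v j⟫ ^ 2 + ⟪v i, v j⟫ := by
  classical
  set n := finrank ℝ E
  set s := σ ^ 2 + σ
  let f (p : ι × ι) : ℝ := ⟪v p.1, v p.2⟫ ^ 2 + ⟪v p.1, v p.2⟫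
  have hn : (0 : ℝ) < n := by
    have : 0 < Fintype.card ι := Fintype.card_pos_iff.mpr ⟨i⟩
    exact_mod_cast (by omega : 0 < n)
  have hf_le : ∀ p ∈ (Finset.univ : Finset ι).offDiag, 0 ≤ s - f p := fun p hp ↦
    sub_nonneg.mpr (sq_inner_add_inner_le (hv _) (hv _) hσ (hinner (Finset.mem_offDiag.mp hp).2.2))
  have sum_nonneg : 0 ≤ ∑ p ∈ Finset.univ.offDiag, f p := by
    have h := sq_card_le_finrank_mul_sum_offDiag hv
    rw [hcard] at h
    push_cast at h
    exact nonneg_of_mul_nonneg_right (by linarith) hn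
  have pair_le : 2 * (s - f (i, j)) ≤ ∑ p ∈ Finset.univ.offDiag, (s - f p) := by
    have hne : (i, j) ≠ (j, i) := fun h ↦ hij (congrArg Prod.fst h)
    have hsub : ({(i, j), (j, i)} : Finset (ι × ι)) ⊆ Finset.univ.offDiag := by
      simp [Finset.insert_subset_iff, hij, hij.symm]
    have h := Finset.sum_le_sum_of_subset_of_nonneg hsub fun p hp _ ↦ hf_le p hp
    rwa [Finset.sum_pair hne, show f (j, i) = f (i, j) by simp only [f, real_inner_comm],
      ← two_mul] at h
  have hs : 0 ≤ s := by positivity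
  rw [Finset.sum_sub_distrib, Finset.sum_const, nsmul_eq_mul, cast_card_offDiag_univ, hcard]
    at pair_le
  push_cast at pair_le
  change _ ≤ f (i, j)
  nlinarith [mul_nonneg hn.le hs]

end Delsarte

/-- A family of unit vectors any two of which are orthogonal or antipodal up to an error `τ` in the
inner product, as the vertices of a regular crosspolytope are with `τ = 0`. The family need not
contain all vertices. -/
structure IsAlmostCrosspolytope (τ : ℝ) (v : ι → E) : Prop where
  norm_eq_one (i : ι) : ‖v i‖ = 1
  orthogonal_or_antipodal : Pairwise fun i j ↦ |⟪v i, v j⟫| ≤ τ ∨ ⟪v i, v j⟫ ≤ -1 + τ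

theorem isAlmostCrosspolytope_of_inner_le [Fintype ι] [FiniteDimensional ℝ E]
    (hv : ∀ i, ‖v i‖ = 1) (hσ : 0 ≤ σ) (hinner : Pairwise fun i j ↦ ⟪v i, v j⟫ ≤ σ)
    (hcard : Fintype.card ι = 2 * finrank ℝ E) :
    IsAlmostCrosspolytope (4 * (finrank ℝ E : ℝ) ^ 2 * (σ ^ 2 + σ)) v := by
  refine ⟨hv, fun i j hij ↦ ?_⟩
  have hn : (1 : ℝ) ≤ finrank ℝ E := by
    have : 0 < Fintype.card ι := Fintype.card_pos_iff.mpr ⟨i⟩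
    exact_mod_cast (by omega : 1 ≤ finrank ℝ E)
  have hlower := neg_le_sq_inner_add_inner hv hσ hinner hcard hij
  have hupper : ⟪v i, v j⟫ ≤ 4 * (finrank ℝ E : ℝ) ^ 2 * (σ ^ 2 + σ) := by
    nlinarith [hinner hij, one_le_pow₀ hn (n := 2), sq_nonneg σ]
  -- On either side of `-1 / 2`, one factor of `t * (t + 1)` is at least `1 / 2` in absolute value.
  rcases le_total ⟪v i, v j⟫ (-1 / 2) with h | h
  · right
    have hη : 0 ≤ (finrank ℝ E : ℝ) ^ 2 * (σ ^ 2 + σ) := by positivity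
    by_contra! hlt
    nlinarith [mul_pos (by linarith : 0 < -⟪v i, v j⟫) (sub_pos.mpr hlt),
      mul_nonneg hη (sub_nonneg.mpr h)]
  · left
    exact abs_le.mpr ⟨by nlinarith, hupper⟩

theorem one_sub_four_mul_le_inner {x y z : E} (hx : ‖x‖ = 1) (hy : ‖y‖ = 1) (hz : ‖z‖ = 1)
    (hxy : ⟪x, y⟫ ≤ -1 + τ) (hxz : ⟪x, z⟫ ≤ -1 + τ) : 1 - 4 * τ ≤ ⟪y, z⟫ := by
  have h : ‖(2 : ℝ) • x + y + z‖ ^ 2 = 6 + 4 * ⟪x, y⟫ + 4 * ⟪x, z⟫ + 2 * ⟪y, z⟫ := by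
    rw [norm_add_sq_real, norm_add_sq_real, norm_smul, inner_add_left, real_inner_smul_left,
      real_inner_smul_left, hx, hy, hz]
    norm_num
    ring
  linarith [sq_nonneg ‖(2 : ℝ) • x + y + z‖]

namespace IsAlmostCrosspolytope

theorem eq_of_inner_le (hv : IsAlmostCrosspolytope τ v) (hτ : 5 * τ < 1) {i j k : ι}
    (hj : ⟪v i, v j⟫ ≤ -1 + τ) (hk : ⟪v i, v k⟫ ≤ -1 + τ) : j = k := by
  by_contra hjk
  have hle := one_sub_four_mul_le_inner (hv.norm_eq_one i) (hv.norm_eq_one j) (hv.norm_eq_one k)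
    hj hk
  rcases hv.orthogonal_or_antipodal hjk with h | h
  · linarith [le_of_abs_le h]
  · linarith

variable [Fintype ι]

theorem sum_sq_inner_le (hv : IsAlmostCrosspolytope τ v) (i : ι) :
    ∑ j, ⟪v i, v j⟫ ^ 2 ≤
      1 + Finset.card {j | ⟪v i, v j⟫ ≤ -1 + τ} + Fintype.card ι * τ ^ 2 := by
  classical
  have hle (j) : ⟪v i, v j⟫ ^ 2 ≤
      (if i = j then 1 else 0) + (if ⟪v i, v j⟫ ≤ -1 + τ then 1 else 0) + τ ^ 2 := by
    have hle_one : ⟪v i, v j⟫ ^ 2 ≤ 1 := by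
      rw [sq_le_one_iff_abs_le_one]
      simpa [hv.norm_eq_one] using abs_real_inner_le_norm (v i) (v j)
    by_cases hij : i = j
    · rw [if_pos hij]
      split_ifs <;> nlinarith
    · rcases hv.orthogonal_or_antipodal hij with h | h
      · have : ⟪v i, v j⟫ ^ 2 ≤ τ ^ 2 := sq_le_sq.mpr (h.trans (le_abs_self τ))
        split_ifs <;> linarith
      · rw [if_pos h, if_neg hij]
        nlinarith
  refine (Finset.sum_le_sum fun j _ ↦ hle j).trans_eq ?_
  simp [Finset.sum_add_distrib]

theorem exists_inner_le [FiniteDimensional ℝ E] (hv : IsAlmostCrosspolytope τ v) (hτ : 5 * τ < 1)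
    (hn : 2 * finrank ℝ E * |τ| < 1) (hcard : Fintype.card ι = 2 * finrank ℝ E) (i : ι) :
    ∃ j, ⟪v i, v j⟫ ≤ -1 + τ := by
  set n := finrank ℝ E
  let degree (i : ι) : ℕ := Finset.card {j | ⟪v i, v j⟫ ≤ -1 + τ}
  by_contra! hi
  have degree_le (j) : degree j ≤ 1 := Finset.card_le_one.mpr fun k hk l hl ↦
    hv.eq_of_inner_le hτ (Finset.mem_filter.mp hk).2 (Finset.mem_filter.mp hl).2
  have degree_eq_zero : degree i = 0 := by simpa [degree] using hi
  have sum_degree_lt : ∑ j, degree j < Fintype.card ι := by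
    simpa using Finset.sum_lt_sum (fun j _ ↦ degree_le j)
      ⟨i, Finset.mem_univ i, degree_eq_zero.trans_lt one_pos⟩
  have hn_pos : (0 : ℝ) < n := by
    have : 0 < Fintype.card ι := Fintype.card_pos_iff.mpr ⟨i⟩
    exact_mod_cast (by omega : 0 < n)
  have welch : (2 * n : ℝ) ^ 2 ≤ n * ∑ i, ∑ j, ⟪v i, v j⟫ ^ 2 := by
    simpa [hv.norm_eq_one, hcard] using sq_sum_sq_norm_le_finrank_mul_sum_sq_inner v
  have sum_le : ∑ i, ∑ j, ⟪v i, v j⟫ ^ 2 ≤ 2 * n + ∑ i, degree i + (2 * n * |τ|) ^ 2 := by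
    refine (Finset.sum_le_sum fun i _ ↦ hv.sum_sq_inner_le i).trans_eq ?_
    simp only [Finset.sum_add_distrib, Finset.sum_const, Finset.card_univ, hcard, nsmul_eq_mul,
      mul_pow, sq_abs, degree]
    push_cast
    ring
  have small : (2 * n * |τ|) ^ 2 < 1 := (sq_lt_one_iff₀ (by positivity)).mpr hn
  have le_sum_degree : (2 * n : ℝ) < ∑ i, degree i + 1 := by
    nlinarith
  have : 2 * n < ∑ i, degree i + 1 := by exact_mod_cast le_sum_degree
  omega

end IsAlmostCrosspolytope

/-- A family of unit vectors any two of which are orthogonal up to an error `τ` in the inner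
product. -/
structure IsAlmostOrthonormal (τ : ℝ) (x : ι → E) : Prop where
  norm_eq_one (i : ι) : ‖x i‖ = 1
  abs_inner_le : Pairwise fun i j ↦ |⟪x i, x j⟫| ≤ τ

section GramSchmidt

open InnerProductSpace Set Submodule

variable {𝕜 F η : Type*} [RCLike 𝕜] [NormedAddCommGroup F] [InnerProductSpace 𝕜 F]
  [LinearOrder η] [LocallyFiniteOrderBot η] [WellFoundedLT η]

theorem sub_gramSchmidt_mem_span (x : η → F) (k : η) :
    x k - gramSchmidt 𝕜 x k ∈ span 𝕜 (x '' Iio k) := by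
  rw [← span_gramSchmidt_Iio 𝕜 x k, gramSchmidt_def 𝕜 x k, sub_sub_cancel]
  refine sum_mem fun i hi ↦ ?_
  have hspan : 𝕜 ∙ gramSchmidt 𝕜 x i ≤ span 𝕜 (gramSchmidt 𝕜 x '' Iio k) :=
    span_mono (singleton_subset_iff.mpr (mem_image_of_mem _ (Finset.mem_Iio.mp hi)))
  exact hspan (starProjection_apply_mem _ _)

theorem inner_gramSchmidt_eq_zero_of_mem_span (x : η → F) (k : η) {v : F}
    (hv : v ∈ span 𝕜 (x '' Iio k)) : inner 𝕜 (gramSchmidt 𝕜 x k) v = 0 := by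
  induction hv using span_induction with
  | mem _ h =>
    obtain ⟨i, hi, rfl⟩ := h
    exact gramSchmidt_inv_triangular 𝕜 x hi
  | zero => exact inner_zero_right _
  | add _ _ _ _ hu hw => rw [inner_add_right, hu, hw, add_zero]
  | smul c _ _ hu => rw [inner_smul_right, hu, mul_zero]

end GramSchmidt

theorem norm_sub_inv_norm_smul_sq_le {x g : E} (hx : ‖x‖ = 1) (hg : g ≠ 0)
    (h : ⟪g, x - g⟫ = 0) : ‖x - ‖g‖⁻¹ • g‖ ^ 2 ≤ 2 * ‖x - g‖ ^ 2 := by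
  have hg' : 0 < ‖g‖ := norm_pos_iff.mpr hg
  have inner_eq : ⟪x, g⟫ = ‖g‖ ^ 2 := by
    rw [real_inner_comm, ← real_inner_self_eq_norm_sq, ← sub_eq_zero, ← inner_sub_right, h]
  have dist_proj : ‖x - g‖ ^ 2 = 1 - ‖g‖ ^ 2 := by
    rw [norm_sub_sq_real, inner_eq, hx]
    ring
  have dist_normalized : ‖x - ‖g‖⁻¹ • g‖ ^ 2 = 2 - 2 * ‖g‖ := by
    rw [norm_sub_sq_real, real_inner_smul_right, inner_eq, norm_smul, hx, norm_inv, norm_norm]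
    field_simp
    ring
  nlinarith [sq_nonneg ‖x - g‖]

namespace IsAlmostOrthonormal

variable {x : ι → E}

theorem comp (hx : IsAlmostOrthonormal τ x) {f : κ → ι} (hf : f.Injective) :
    IsAlmostOrthonormal τ (x ∘ f) :=
  ⟨fun k ↦ hx.norm_eq_one (f k), fun _ _ hkl ↦ hx.abs_inner_le (hf.ne hkl)⟩

variable [Fintype ι]

theorem mul_sum_sq_le (hx : IsAlmostOrthonormal τ x) (c : ι → ℝ) :
    (1 - (Fintype.card ι - 1) * τ) * ∑ i, c i ^ 2 ≤ ‖∑ i, c i • x i‖ ^ 2 := by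
  classical
  have term_le (i j) : (if i = j then (1 + τ) * c i ^ 2 else 0) - τ / 2 * (c i ^ 2 + c j ^ 2) ≤
      c i * c j * ⟪x i, x j⟫ := by
    split_ifs with hij
    · subst hij
      rw [real_inner_self_eq_norm_sq, hx.norm_eq_one]
      linarith
    · obtain ⟨hl, hu⟩ := abs_le.mp (hx.abs_inner_le hij)
      nlinarith [mul_nonneg (sub_nonneg.mpr hl) (sq_nonneg (c i + c j)),
        mul_nonneg (sub_nonneg.mpr hu) (sq_nonneg (c i - c j))]
  rw [sq_norm_sum_smul]
  refine le_of_eq_of_le ?_ (Finset.sum_le_sum fun i _ ↦ Finset.sum_le_sum fun j _ ↦ term_le i j)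
  simp only [Finset.sum_sub_distrib, Finset.sum_ite_eq, Finset.mem_univ, if_true, ← Finset.mul_sum,
    Finset.sum_add_distrib, Finset.sum_const, Finset.card_univ, nsmul_eq_mul]
  ring

theorem linearIndependent (hx : IsAlmostOrthonormal τ x) (hτ : (Fintype.card ι - 1) * τ < 1) :
    LinearIndependent ℝ x := by
  refine Fintype.linearIndependent_iff.mpr fun c hc ↦ ?_
  have hle := hx.mul_sum_sq_le c
  rw [hc, norm_zero, zero_pow two_ne_zero] at hle
  have hsum : ∑ i, c i ^ 2 = 0 :=
    le_antisymm (nonpos_of_mul_nonpos_right hle (by linarith)) (by positivity)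
  simpa [Finset.sum_eq_zero_iff_of_nonneg, sq_nonneg] using hsum

theorem mul_norm_sq_le (hx : IsAlmostOrthonormal τ x) {v : E}
    (hv : v ∈ Submodule.span ℝ (Set.range x)) :
    (1 - (Fintype.card ι - 1) * τ) * ‖v‖ ^ 2 ≤ ∑ i, ⟪x i, v⟫ ^ 2 := by
  obtain ⟨c, hc⟩ := (Submodule.mem_span_range_iff_exists_fun ℝ).mp hv
  set a := 1 - (Fintype.card ι - 1) * τ
  have lower : a * ∑ i, c i ^ 2 ≤ ‖v‖ ^ 2 := hc ▸ hx.mul_sum_sq_le c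
  have cauchy_schwarz : (‖v‖ ^ 2) ^ 2 ≤ (∑ i, c i ^ 2) * ∑ i, ⟪x i, v⟫ ^ 2 := by
    have h : ‖v‖ ^ 2 = ∑ i, c i * ⟪x i, v⟫ := by
      rw [← real_inner_self_eq_norm_sq]
      nth_rw 1 [← hc]
      simp only [sum_inner, real_inner_smul_left]
    exact h ▸ Finset.sum_mul_sq_le_sq_mul_sq _ _ _
  have hB : 0 ≤ ∑ i, ⟪x i, v⟫ ^ 2 := by positivity
  rcases (sq_nonneg ‖v‖).eq_or_lt with h | h
  · rwa [← h, mul_zero]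
  · refine le_of_mul_le_mul_left ?_ h
    rcases le_total 0 a with ha | ha <;> nlinarith

section GramSchmidt

open InnerProductSpace Set Submodule

variable [LinearOrder ι] [LocallyFiniteOrderBot ι]

theorem norm_sub_gramSchmidt_sq_le (hx : IsAlmostOrthonormal τ x) (hτ₀ : 0 ≤ τ)
    (hτ : 4 * Fintype.card ι * τ ≤ 1) (k : ι) :
    3 * ‖x k - gramSchmidt ℝ x k‖ ^ 2 ≤ 4 * Fintype.card ι * τ ^ 2 := by
  have card_le : (Fintype.card (Iio k) : ℝ) ≤ Fintype.card ι := by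
    exact_mod_cast Fintype.card_subtype_le _
  have span_le := (hx.comp (f := ((↑) : Iio k → ι)) Subtype.val_injective).mul_norm_sq_le
    (v := x k - gramSchmidt ℝ x k) (by
      rw [range_comp, Subtype.range_coe]
      exact sub_gramSchmidt_mem_span x k)
  have sum_le : ∑ i : Iio k, ⟪x i, x k - gramSchmidt ℝ x k⟫ ^ 2 ≤ Fintype.card ι * τ ^ 2 := by
    have term_le (i : Iio k) : ⟪x i, x k - gramSchmidt ℝ x k⟫ ^ 2 ≤ τ ^ 2 := by
      rw [inner_sub_right, real_inner_comm (gramSchmidt ℝ x k),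
        gramSchmidt_inv_triangular ℝ x i.2, sub_zero]
      exact sq_le_sq.mpr ((hx.abs_inner_le i.2.ne).trans (le_abs_self τ))
    calc _ ≤ ∑ _i : Iio k, τ ^ 2 := Finset.sum_le_sum fun i _ ↦ term_le i
      _ = Fintype.card (Iio k) * τ ^ 2 := by simp
      _ ≤ Fintype.card ι * τ ^ 2 := by gcongr
  have factor : 3 / 4 ≤ 1 - (Fintype.card (Iio k) - 1) * τ := by nlinarith
  have := (mul_le_mul_of_nonneg_right factor (sq_nonneg _)).trans (span_le.trans sum_le)
  linarith

theorem norm_sub_gramSchmidtNormed_le (hx : IsAlmostOrthonormal τ x) (hτ₀ : 0 ≤ τ)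
    (hτ : 4 * Fintype.card ι * τ ≤ 1) (k : ι) :
    ‖x k - gramSchmidtNormed ℝ x k‖ ≤ 2 * √(Fintype.card ι) * τ := by
  refine le_of_sq_le_sq ?_ (by positivity)
  have hli : LinearIndependent ℝ x := hx.linearIndependent (by nlinarith)
  have h := norm_sub_inv_norm_smul_sq_le (hx.norm_eq_one k) (gramSchmidt_ne_zero k hli)
    (inner_gramSchmidt_eq_zero_of_mem_span x k (sub_gramSchmidt_mem_span x k))
  calc ‖x k - gramSchmidtNormed ℝ x k‖ ^ 2 ≤ 4 * Fintype.card ι * τ ^ 2 := by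
        refine h.trans ?_
        nlinarith [hx.norm_sub_gramSchmidt_sq_le hτ₀ hτ k,
          mul_nonneg (Nat.cast_nonneg (α := ℝ) (Fintype.card ι)) (sq_nonneg τ)]
    _ = (2 * √(Fintype.card ι) * τ) ^ 2 := by
        rw [mul_pow, mul_pow, Real.sq_sqrt (Nat.cast_nonneg _)]
        norm_num

end GramSchmidt

theorem norm_add_le_of_inner_le [FiniteDimensional ℝ E] (hx : IsAlmostOrthonormal τ x) (hτ₀ : 0 ≤ τ)
    (hτ : 4 * Fintype.card ι * τ ≤ 1) (hcard : Fintype.card ι = finrank ℝ E) {y : E}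
    (hy : ‖y‖ = 1) {k : ι} (hk : ⟪x k, y⟫ ≤ -1 + τ) (hne : ∀ j ≠ k, |⟪x j, y⟫| ≤ τ) :
    ‖x k + y‖ ≤ 3 * √(Fintype.card ι) * τ := by
  refine le_of_sq_le_sq ?_ (by positivity)
  have hspan : x k + y ∈ Submodule.span ℝ (Set.range x) := by
    rw [(hx.linearIndependent (by nlinarith)).span_eq_top_of_card_eq_finrank' hcard]
    trivial
  have term_le (j) : ⟪x j, x k + y⟫ ^ 2 ≤ (2 * τ) ^ 2 := by
    rw [sq_le_sq, abs_of_nonneg (by positivity : 0 ≤ 2 * τ), inner_add_right]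
    by_cases hjk : j = k
    · have := neg_one_le_real_inner_of_norm_eq_one (hx.norm_eq_one k) hy
      rw [hjk, real_inner_self_eq_norm_sq, hx.norm_eq_one, abs_le]
      constructor <;> linarith
    · linarith [abs_add_le ⟪x j, x k⟫ ⟪x j, y⟫, hx.abs_inner_le hjk, hne j hjk]
  have factor : 3 / 4 ≤ 1 - (Fintype.card ι - 1) * τ := by nlinarith
  have h : 3 / 4 * ‖x k + y‖ ^ 2 ≤ Fintype.card ι * (2 * τ) ^ 2 :=
    calc _ ≤ (1 - (Fintype.card ι - 1) * τ) * ‖x k + y‖ ^ 2 := by gcongr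
      _ ≤ ∑ j, ⟪x j, x k + y⟫ ^ 2 := hx.mul_norm_sq_le hspan
      _ ≤ ∑ _j : ι, (2 * τ) ^ 2 := Finset.sum_le_sum fun j _ ↦ term_le j
      _ = Fintype.card ι * (2 * τ) ^ 2 := by simp
  rw [mul_pow, mul_pow, Real.sq_sqrt (Nat.cast_nonneg _)]
  nlinarith [mul_nonneg (Nat.cast_nonneg (α := ℝ) (Fintype.card ι)) (sq_nonneg τ)]

end IsAlmostOrthonormal

theorem exists_sum_equiv_of_involutive [Fintype ι] [Fintype κ] {a : ι → ι} (ha : a.Involutive)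
    (hfix : ∀ i, a i ≠ i) (hcard : Fintype.card ι = 2 * Fintype.card κ) :
    ∃ e : κ ⊕ κ ≃ ι, ∀ k, e (.inr k) = a (e (.inl k)) := by
  let := LinearOrder.lift' _ (Fintype.equivFin ι).injective
  have lt_iff (i) : i < a i ↔ ¬a i < a (a i) := by
    rw [ha i, not_lt, (hfix i).symm.le_iff_lt]
  let halves : {i // i < a i} ⊕ {i // i < a i} ≃ ι :=
    (Equiv.sumCongr (.refl _) (ha.toPerm.subtypeEquiv lt_iff)).trans (Equiv.sumCompl _)
  have card_half : Fintype.card κ = Fintype.card {i // i < a i} := by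
    have := Fintype.card_congr halves
    rw [Fintype.card_sum] at this
    omega
  let half := Fintype.equivOfCardEq card_half
  exact ⟨(half.sumCongr half).trans halves, fun k ↦ rfl⟩

theorem exists_equiv_fin_two_mul (d : ℕ) :
    ∃ f : Fin (2 * d) ≃ Fin d ⊕ Fin d, ∀ i : Fin d,
      f ⟨i, by omega⟩ = .inl i ∧ f ⟨i + d, by omega⟩ = .inr i := by
  refine ⟨(finCongr (two_mul d)).trans finSumFinEquiv.symm, fun i ↦ ?_⟩
  simp only [Equiv.trans_apply, Equiv.symm_apply_eq, finSumFinEquiv_apply_left,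
    finSumFinEquiv_apply_right]
  exact ⟨rfl, Fin.ext (add_comm _ _)⟩

namespace IsAlmostCrosspolytope

variable [Fintype ι] [Fintype κ] [FiniteDimensional ℝ E]

theorem exists_sum_equiv (hv : IsAlmostCrosspolytope τ v) (hτ : 5 * τ < 1)
    (hn : 2 * finrank ℝ E * |τ| < 1) (hι : Fintype.card ι = 2 * finrank ℝ E)
    (hκ : Fintype.card κ = finrank ℝ E) :
    ∃ e : κ ⊕ κ ≃ ι, IsAlmostOrthonormal τ (fun k ↦ v (e (.inl k))) ∧
      (∀ k, ⟪v (e (.inl k)), v (e (.inr k))⟫ ≤ -1 + τ) ∧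
      Pairwise fun k l ↦ |⟪v (e (.inl k)), v (e (.inr l))⟫| ≤ τ := by
  choose a ha using hv.exists_inner_le hτ hn hι
  have ha_invol : a.Involutive := fun i ↦
    hv.eq_of_inner_le hτ (ha (a i)) (by rw [real_inner_comm]; exact ha i)
  have ha_ne (i) : a i ≠ i := fun h ↦ by
    have := ha i
    rw [h, real_inner_self_eq_norm_sq, hv.norm_eq_one] at this
    linarith
  have orthogonal {i j : ι} (hij : i ≠ j) (hij' : a i ≠ j) : |⟪v i, v j⟫| ≤ τ :=
    (hv.orthogonal_or_antipodal hij).resolve_right fun h ↦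
      hij' (hv.eq_of_inner_le hτ (ha i) h)
  obtain ⟨e, he⟩ := exists_sum_equiv_of_involutive ha_invol ha_ne (hκ ▸ hι)
  refine ⟨e, ⟨fun k ↦ hv.norm_eq_one _, fun k l hkl ↦ orthogonal ?_ ?_⟩,
    fun k ↦ he k ▸ ha _, fun k l hkl ↦ orthogonal ?_ ?_⟩
  · simpa using hkl
  · simp [← he]
  · simp
  · simpa [← he] using hkl

theorem exists_orthonormal [LinearOrder κ] [LocallyFiniteOrderBot κ]
    (hv : IsAlmostCrosspolytope τ v) (hτ₀ : 0 ≤ τ) (hτ : 5 * τ < 1)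
    (hn : 4 * finrank ℝ E * τ ≤ 1) (hι : Fintype.card ι = 2 * finrank ℝ E)
    (hκ : Fintype.card κ = finrank ℝ E) :
    ∃ (e : κ ⊕ κ ≃ ι) (w : κ → E), Orthonormal ℝ w ∧ ∀ k,
      ‖v (e (.inl k)) - w k‖ ≤ 2 * √(finrank ℝ E) * τ ∧
      ‖v (e (.inr k)) - -w k‖ ≤ 5 * √(finrank ℝ E) * τ := by
  obtain ⟨e, hx, hpair, hcross⟩ :=
    hv.exists_sum_equiv (κ := κ) hτ (by rw [abs_of_nonneg hτ₀]; linarith) hι hκ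
  rw [← hκ] at hn ⊢
  have hli := hx.linearIndependent (by nlinarith)
  refine ⟨e, _, InnerProductSpace.gramSchmidtNormed_orthonormal hli, fun k ↦ ?_⟩
  have dist_le := hx.norm_sub_gramSchmidtNormed_le hτ₀ hn k
  have add_le :=
    hx.norm_add_le_of_inner_le hτ₀ hn hκ (hv.norm_eq_one _) (hpair k) fun j hj ↦ hcross hj
  refine ⟨dist_le, (norm_sub_le_norm_sub_add_norm_sub _ (-v (e (.inl k))) _).trans ?_⟩
  rw [sub_neg_eq_add, add_comm (v _), neg_sub_neg, norm_sub_rev (_ : E) (v _)]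
  linarith

end IsAlmostCrosspolytope

theorem arccos_inner_le_pi_div_two_mul_norm_sub {x y : E} (hx : ‖x‖ = 1) (hy : ‖y‖ = 1) :
    Real.arccos ⟪x, y⟫ ≤ Real.pi / 2 * ‖x - y‖ := by
  have cos_le := Real.cos_le_one_sub_mul_cos_sq (x := Real.arccos ⟪x, y⟫)
    (by rw [abs_of_nonneg (Real.arccos_nonneg _)]; exact Real.arccos_le_pi _)
  rw [Real.cos_arccos (neg_one_le_real_inner_of_norm_eq_one hx hy)
    (real_inner_le_one_of_norm_eq_one hx hy)] at cos_le
  refine le_of_sq_le_sq ?_ (by positivity)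
  rw [mul_pow, norm_sub_sq_real, hx, hy]
  calc Real.arccos ⟪x, y⟫ ^ 2
      = (Real.pi / 2) ^ 2 * (2 * (2 / Real.pi ^ 2 * Real.arccos ⟪x, y⟫ ^ 2)) := by
        field_simp
    _ ≤ (Real.pi / 2) ^ 2 * (1 ^ 2 - 2 * ⟪x, y⟫ + 1 ^ 2) := by
        gcongr
        linarith

theorem le_of_pi_div_two_sub_le_arccos {t δ : ℝ} (ht : t ≤ 1) (hδ : 0 ≤ δ)
    (h : Real.pi / 2 - δ ≤ Real.arccos t) : t ≤ δ := by
  rcases le_total t 0 with ht₀ | ht₀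
  · exact ht₀.trans hδ
  · calc t = Real.sin (Real.arcsin t) := (Real.sin_arcsin (by linarith) ht).symm
      _ ≤ Real.arcsin t := Real.sin_le (Real.arcsin_nonneg.mpr ht₀)
      _ ≤ δ := by
        rw [Real.arccos] at h
        linarith

theorem four_mul_sq_mul_sq_add_le {a ε : ℝ} (ha : 1 ≤ a) (hε₀ : 0 ≤ ε) (hε : 64 * a ^ 3 * ε ≤ 1) :
    4 * a ^ 2 * ((2 * ε) ^ 2 + 2 * ε) ≤ 33 / 4 * a ^ 2 * ε := by
  have hε' : 64 * ε ≤ 1 := le_trans (by nlinarith [one_le_pow₀ ha (n := 3)]) hε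
  -- `33 / 4 = 4 * 2 * (1 + 2 / 64)`
  nlinarith [mul_nonneg (mul_nonneg (sq_nonneg a) hε₀) (sub_nonneg.mpr hε')]

theorem card_eq_and_exists_orthonormal_arccos_inner_le [Fintype ι] [Fintype κ] [LinearOrder κ]
    [LocallyFiniteOrderBot κ] {ε : ℝ} (hn : 0 < finrank ℝ E) (hκ : Fintype.card κ = finrank ℝ E)
    (hε₀ : 0 ≤ ε) (hε : 64 * (finrank ℝ E : ℝ) ^ 3 * ε ≤ 1) (hv : ∀ i, ‖v i‖ = 1)
    (hinner : Pairwise fun i j ↦ ⟪v i, v j⟫ ≤ 2 * ε) (hι : 2 * finrank ℝ E ≤ Fintype.card ι) :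
    Fintype.card ι = 2 * finrank ℝ E ∧
    ∃ (e : κ ⊕ κ ≃ ι) (w : κ → E), Orthonormal ℝ w ∧ ∀ k,
      Real.arccos ⟪v (e (.inl k)), w k⟫ ≤ 96 * (finrank ℝ E : ℝ) ^ 3 * ε ∧
      Real.arccos ⟪v (e (.inr k)), -w k⟫ ≤ 96 * (finrank ℝ E : ℝ) ^ 3 * ε := by
  have : FiniteDimensional ℝ E := Module.finite_of_finrank_pos hn
  have hn' : (1 : ℝ) ≤ finrank ℝ E := by exact_mod_cast hn
  have τ_le := four_mul_sq_mul_sq_add_le hn' hε₀ hε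
  have hcrosspolytope := isAlmostCrosspolytope_of_inner_le hv (by positivity) hinner
  have hcard_le := card_le_two_mul_finrank hv (by positivity) hinner
  set n := finrank ℝ E
  set τ := 4 * (n : ℝ) ^ 2 * ((2 * ε) ^ 2 + 2 * ε)
  have hτ₀ : 0 ≤ τ := by positivity
  have hnτ : 256 * n * τ ≤ 33 := by nlinarith
  have hτ : 256 * τ ≤ 33 := by nlinarith
  have hcard : Fintype.card ι = 2 * n := (hcard_le (by linarith)).antisymm hι
  obtain ⟨e, w, hw, hdist⟩ :=
    (hcrosspolytope hcard).exists_orthonormal hτ₀ (by linarith) (by linarith) hcard hκ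
  have arccos_le {x y : E} (hx : ‖x‖ = 1) (hy : ‖y‖ = 1) (hxy : ‖x - y‖ ≤ 5 * √n * τ) :
      Real.arccos ⟪x, y⟫ ≤ 96 * (n : ℝ) ^ 3 * ε :=
    calc Real.arccos ⟪x, y⟫ ≤ Real.pi / 2 * ‖x - y‖ :=
          arccos_inner_le_pi_div_two_mul_norm_sub hx hy
      _ ≤ 4 / 2 * (5 * n * (33 / 4 * n ^ 2 * ε)) := by
          gcongr
          · exact Real.pi_le_four
          · refine hxy.trans ?_
            gcongr
            exact Real.sqrt_le_iff.mpr ⟨by positivity, le_self_pow₀ hn' two_ne_zero⟩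
      _ ≤ 96 * (n : ℝ) ^ 3 * ε := by linarith [mul_nonneg (pow_nonneg (Nat.cast_nonneg n) 3) hε₀]
  refine ⟨hcard, e, w, hw, fun k ↦ ⟨arccos_le (hv _) (hw.norm_eq_one k) ((hdist k).1.trans ?_),
    arccos_le (hv _) (by rw [norm_neg, hw.norm_eq_one]) (hdist k).2⟩⟩
  gcongr
  norm_num

theorem crosspolytope_stability_general {d : ℕ} (hd : 0 < d) (hE : finrank ℝ E = d) {ε : ℝ}
    (hε₀ : 0 ≤ ε) (hε : 64 * (d : ℝ) ^ 3 * ε ≤ 1) (X : Finset E) (hXcard : 2 * d ≤ X.card)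
    (hXunit : ∀ x ∈ X, ‖x‖ = 1)
    (hdist : ∀ x ∈ X, ∀ y ∈ X, x ≠ y → Real.pi / 2 - 2 * ε ≤ Real.arccos ⟪x, y⟫) :
    X.card = 2 * d ∧
    ∃ w : Fin d → E, Orthonormal ℝ w ∧
      ∃ u : Fin (2 * d) → E,
        Function.Injective u ∧ (∀ i, u i ∈ X) ∧ (∀ x ∈ X, ∃ i, u i = x) ∧
        ∀ i : Fin d,
          Real.arccos ⟪u ⟨i, by omega⟩, w i⟫ ≤ 96 * (d : ℝ) ^ 3 * ε ∧
          Real.arccos ⟪u ⟨i + d, by omega⟩, -(w i)⟫ ≤ 96 * (d : ℝ) ^ 3 * ε := by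
  subst hE
  have hv (x : X) : ‖(x : E)‖ = 1 := hXunit x x.2
  have hinner : Pairwise fun x y : X ↦ ⟪(x : E), y⟫ ≤ 2 * ε := fun x y hxy ↦
    le_of_pi_div_two_sub_le_arccos (real_inner_le_one_of_norm_eq_one (hv x) (hv y)) (by positivity)
      (hdist x x.2 y y.2 (Subtype.coe_ne_coe.mpr hxy))
  obtain ⟨hcard, e, w, hw, hdist_le⟩ := card_eq_and_exists_orthonormal_arccos_inner_le
    hd (Fintype.card_fin _) hε₀ hε hv hinner (by rwa [Fintype.card_coe])
  obtain ⟨f, hf⟩ := exists_equiv_fin_two_mul (finrank ℝ E)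
  refine ⟨by rwa [Fintype.card_coe] at hcard, w, hw, fun i ↦ e (f i),
    Subtype.val_injective.comp (e.injective.comp f.injective), fun i ↦ (e (f i)).2,
    fun x hx ↦ ⟨f.symm (e.symm ⟨x, hx⟩), by simp⟩, fun i ↦ ?_⟩
  simpa only [hf i] using hdist_le i

/-- Stability of the regular crosspolytope: if at least `2d` unit vectors in `ℝ^d` have
pairwise spherical distances at least `π/2 - 2ε` with `0 < ε < 1/(64 d⁴)`, then there are
exactly `2d` of them, and they are within spherical distance `96 d³ ε` of the vertices
`±w_1, …, ±w_d` of a regular crosspolytope given by an orthonormal basis `w_1, …, w_d`. -/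
theorem crosspolytope_stability (d : ℕ) (hd : 2 ≤ d) (ε : ℝ)
    (hε0 : 0 < ε) (hε1 : ε < 1 / (64 * (d : ℝ) ^ 4))
    (X : Finset (EuclideanSpace ℝ (Fin d)))
    (hXcard : 2 * d ≤ X.card)
    (hXunit : ∀ x ∈ X, ‖x‖ = 1)
    (hdist : ∀ x ∈ X, ∀ y ∈ X, x ≠ y →
      Real.pi / 2 - 2 * ε ≤ Real.arccos ⟪x, y⟫) :
    X.card = 2 * d ∧
    ∃ w : Fin d → EuclideanSpace ℝ (Fin d), Orthonormal ℝ w ∧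
      ∃ u : Fin (2 * d) → EuclideanSpace ℝ (Fin d),
        Function.Injective u ∧ (∀ i, u i ∈ X) ∧ (∀ x ∈ X, ∃ i, u i = x) ∧
        ∀ i : Fin d,
          Real.arccos ⟪u ⟨i.1, by have := i.2; omega⟩, w i⟫ ≤ 96 * (d : ℝ) ^ 3 * ε ∧
          Real.arccos ⟪u ⟨i.1 + d, by have := i.2; omega⟩, -(w i)⟫ ≤ 96 * (d : ℝ) ^ 3 * ε := by
  have hd' : (1 : ℝ) ≤ d := by exact_mod_cast one_le_two.trans hd
  rw [lt_div_iff₀ (by positivity)] at hε1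
  have hε : 64 * (d : ℝ) ^ 3 * ε ≤ 1 :=
    calc 64 * (d : ℝ) ^ 3 * ε ≤ 64 * (d : ℝ) ^ 4 * ε := by
          gcongr
          norm_num
      _ ≤ 1 := by linarith
  exact crosspolytope_stability_general (two_pos.trans_le hd) finrank_euclideanSpace_fin hε0.le hε X
    hXcard hXunit hdist
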